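/- arXiv:2311.16609 — 4 statements merged into one kernel-verified Lean document; each statement's English description precedes it below -/
import Mathlib

section
/- Let x_1, …, x_n be pairwise distinct complex numbers, let ℓ ≥ n, and define the n × ℓ matrices V_0 with entries (V_0)_{k,t} = x_k^t for 0 ≤ t ≤ ℓ−1 and V_1 with entries (V_1)_{k,t} = x_k^{t+1} for 0 ≤ t ≤ ℓ−1. Let P be an invertible n × n complex matrix and set Z_0 = P V_0 and Z_1 = P V_1. Then the matrix Z_0 Z_0* is invertible (where * denotes conjugate transpose), and Z_1 Z_0* (Z_0 Z_0*)^{-1} = P D P^{-1}, where D is the n × n diagonal matrix with diagonal entries x_1, …, x_n. -/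
open Matrix

/-!
Raising every exponent by one multiplies each row by its node: `V₁ = D V₀`, hence
`Z₁ = (P D P⁻¹) Z₀`. The first `n` columns of `V₀` form a square Vandermonde matrix with distinct
nodes, so `V₀`, and with it `Z₀ = P V₀`, has linearly independent rows. Since `v Z₀ Z₀ᴴ = 0` forces
`‖v Z₀‖² = 0`, the Gram matrix `Z₀ Z₀ᴴ` is invertible, and `Z₀ᴴ (Z₀ Z₀ᴴ)⁻¹` is a right inverse
of `Z₀`.
-/

section IndependentRows

variable {l m n R K : Type*} [Fintype m]

theorem linearIndependent_row_mul [Semiring R] {A : Matrix l m R} {B : Matrix m n R}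
    (hA : LinearIndependent R A.row) (hB : LinearIndependent R B.row) :
    LinearIndependent R (A * B).row :=
  hA.map_injOn B.vecMulLinear (vecMul_injective_iff.mpr hB).injOn

variable [Fintype n] [DecidableEq m]
  [Field K] [PartialOrder K] [StarRing K] [StarOrderedRing K]

theorem isUnit_mul_conjTranspose_self {A : Matrix m n K} (hA : LinearIndependent K A.row) :
    IsUnit (A * Aᴴ) := by
  rw [← vecMul_injective_iff] at hA
  rw [← vecMul_injective_iff_isUnit, ← coe_vecMulLinear, injective_iff_map_eq_zero]
  intro v hv
  have hvA : v ᵥ* A = 0 := (vecMul_self_mul_conjTranspose_eq_zero A v).mp hv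
  exact hA (hvA.trans (zero_vecMul A).symm)

theorem mul_mul_conjTranspose_mul_inv_cancel {A : Matrix m n K} (hA : LinearIndependent K A.row)
    (M : Matrix l m K) :
    M * A * Aᴴ * (A * Aᴴ)⁻¹ = M := by
  have hdet : IsUnit (A * Aᴴ).det :=
    (isUnit_iff_isUnit_det _).mp (isUnit_mul_conjTranspose_self hA)
  rw [Matrix.mul_assoc M, mul_nonsing_inv_cancel_right _ _ hdet]

end IndependentRows

section Powers

variable {ι R : Type*} [Fintype ι]

theorem linearIndependent_row_vandermonde [CommRing R] [IsDomain R] {n : ℕ} {x : Fin n → R}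
    (hx : Function.Injective x) : LinearIndependent R (vandermonde x).row :=
  linearIndependent_rows_of_det_ne_zero (det_vandermonde_ne_zero_iff.mpr hx)

theorem linearIndependent_row_pow [CommRing R] [IsDomain R] {ℓ : ℕ} (hℓ : Fintype.card ι ≤ ℓ)
    {x : ι → R} (hx : Function.Injective x) :
    LinearIndependent R (of fun (k : ι) (t : Fin ℓ) => x k ^ (t : ℕ)).row := by
  let e := (Fintype.equivFin ι).symm
  rw [← linearIndependent_equiv e]
  exact .of_comp (LinearMap.funLeft R R (Fin.castLE hℓ))
    (linearIndependent_row_vandermonde (hx.comp e.injective))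

theorem of_pow_succ_eq_diagonal_mul [DecidableEq ι] [Semiring R] {ℓ : ℕ} (x : ι → R) :
    (of fun (k : ι) (t : Fin ℓ) => x k ^ ((t : ℕ) + 1)) =
      diagonal x * of fun (k : ι) (t : Fin ℓ) => x k ^ (t : ℕ) := by
  ext k t
  rw [diagonal_mul, of_apply, of_apply, pow_succ']

end Powers

theorem esprit_identity_general {ι K : Type*} [Fintype ι] [DecidableEq ι]
    [Field K] [PartialOrder K] [StarRing K] [StarOrderedRing K]
    {ℓ : ℕ} (hℓ : Fintype.card ι ≤ ℓ) {x : ι → K} (hx : Function.Injective x)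
    {P : Matrix ι ι K} (hP : IsUnit P) {V₀ V₁ Z₀ Z₁ : Matrix ι (Fin ℓ) K}
    (hV₀ : V₀ = of fun (k : ι) (t : Fin ℓ) => x k ^ (t : ℕ))
    (hV₁ : V₁ = of fun (k : ι) (t : Fin ℓ) => x k ^ ((t : ℕ) + 1))
    (hZ₀ : Z₀ = P * V₀) (hZ₁ : Z₁ = P * V₁) :
    IsUnit (Z₀ * Z₀ᴴ) ∧ Z₁ * Z₀ᴴ * (Z₀ * Z₀ᴴ)⁻¹ = P * diagonal x * P⁻¹ := by
  have hV₀_rows : LinearIndependent K V₀.row := hV₀ ▸ linearIndependent_row_pow hℓ hx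
  have hZ₀_rows : LinearIndependent K Z₀.row :=
    hZ₀ ▸ linearIndependent_row_mul (linearIndependent_rows_iff_isUnit.mpr hP) hV₀_rows
  have hV₁_shift : V₁ = diagonal x * V₀ := by rw [hV₁, hV₀, of_pow_succ_eq_diagonal_mul]
  have hZ₁_shift : Z₁ = P * diagonal x * P⁻¹ * Z₀ := by
    rw [hZ₁, hV₁_shift, hZ₀, Matrix.mul_assoc _ P⁻¹,
      nonsing_inv_mul_cancel_left _ _ ((isUnit_iff_isUnit_det P).mp hP), Matrix.mul_assoc]
  refine ⟨isUnit_mul_conjTranspose_self hZ₀_rows, ?_⟩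
  rw [hZ₁_shift, mul_mul_conjTranspose_mul_inv_cancel hZ₀_rows]

/-- ESPRIT identity: with `V₀ k t = x k ^ t`, `V₁ k t = x k ^ (t+1)`
(`n × ℓ` matrices, `ℓ ≥ n`, the `x k` pairwise distinct), `P` invertible and
`Z₀ = P V₀`, `Z₁ = P V₁`, the matrix `Z₀ Z₀ᴴ` is invertible and
`Z₁ Z₀ᴴ (Z₀ Z₀ᴴ)⁻¹ = P (diagonal x) P⁻¹`. -/
theorem esprit_identity (n ℓ : ℕ) (hℓ : ℓ ≥ n)
    (x : Fin n → ℂ) (hdist : Function.Injective x)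
    (P : Matrix (Fin n) (Fin n) ℂ) (hP : IsUnit P)
    (V₀ V₁ Z₀ Z₁ : Matrix (Fin n) (Fin ℓ) ℂ)
    (hV₀ : V₀ = Matrix.of fun (k : Fin n) (t : Fin ℓ) => (x k) ^ (t : ℕ))
    (hV₁ : V₁ = Matrix.of fun (k : Fin n) (t : Fin ℓ) => (x k) ^ ((t : ℕ) + 1))
    (hZ₀ : Z₀ = P * V₀) (hZ₁ : Z₁ = P * V₁) :
    IsUnit (Z₀ * Z₀ᴴ) ∧
      Z₁ * Z₀ᴴ * (Z₀ * Z₀ᴴ)⁻¹ = P * Matrix.diagonal x * P⁻¹ := by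
  open scoped ComplexOrder in
  exact esprit_identity_general (by simpa using hℓ) hdist hP hV₀ hV₁ hZ₀ hZ₁
end

section
/- Let x_1, …, x_n be pairwise distinct complex numbers, let ℓ ≥ n, and define the n × ℓ matrices V_0 with entries (V_0)_{k,t} = x_k^t for 0 ≤ t ≤ ℓ−1 and V_1 with entries (V_1)_{k,t} = x_k^{t+1} for 0 ≤ t ≤ ℓ−1. Let P be an invertible n × n complex matrix and set Z_0 = P V_0 and Z_1 = P V_1. Then the set of eigenvalues of the n × n matrix Z_1 Z_0* (Z_0 Z_0*)^{-1} is exactly {x_1, …, x_n}. -/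
open Matrix

/-!
Shifting the exponents of a Vandermonde matrix `V₀` multiplies its rows by the nodes, so
`Z₁ = P (diagonal x) V₀ = (P (diagonal x) P⁻¹) Z₀`. The nodes being distinct, `V₀` and hence `Z₀`
have independent rows, and `Z₀ᴴ (Z₀ Z₀ᴴ)⁻¹` is a right inverse of `Z₀`. The ESPRIT matrix is thus
`P (diagonal x) P⁻¹`, which is similar to `diagonal x`.
-/

section Vandermonde

variable {R ι : Type*} [CommRing R] {ℓ : ℕ}

lemma diagonal_mul_rectVandermonde_one [Fintype ι] [DecidableEq ι] (x : ι → R) :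
    diagonal x * rectVandermonde x 1 ℓ = of fun i (t : Fin ℓ) => x i ^ ((t : ℕ) + 1) := by
  ext i t
  simp [rectVandermonde_apply, diagonal_mul, pow_succ']

lemma vecMul_rectVandermonde_one_injective [IsDomain R] [Fintype ι] {x : ι → R}
    (hx : Function.Injective x) (hℓ : Fintype.card ι ≤ ℓ) :
    Function.Injective (rectVandermonde x 1 ℓ).vecMul := by
  refine (injective_iff_map_eq_zero (vecMulLinear (rectVandermonde x 1 ℓ))).2 fun v hv => ?_
  let e := (Fintype.equivFin ι).symm
  have moments_eq_zero (t : Fin (Fintype.card ι)) : ∑ k, v (e k) * x (e k) ^ (t : ℕ) = 0 := by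
    rw [e.sum_comp fun i => v i * x i ^ (t : ℕ)]
    simpa [vecMul, dotProduct, rectVandermonde_apply] using congrFun hv (Fin.castLE hℓ t)
  have comp_eq_zero : v ∘ e = 0 :=
    eq_zero_of_forall_pow_sum_mul_pow_eq_zero (hx.comp e.injective) moments_eq_zero
  exact e.surjective.injective_comp_right comp_eq_zero

end Vandermonde

section Eigenvalues

variable {K ι : Type*} [Field K] [Fintype ι] [DecidableEq ι]

lemma setOf_exists_mulVec_eq_smul (A : Matrix ι ι K) :
    {μ : K | ∃ v : ι → K, v ≠ 0 ∧ A *ᵥ v = μ • v} = spectrum K A := by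
  ext μ
  rw [← spectrum_toLin', ← Module.End.hasEigenvalue_iff_mem_spectrum]
  constructor
  · rintro ⟨v, hv, hAv⟩
    exact Module.End.hasEigenvalue_of_hasEigenvector
      ⟨Module.End.mem_eigenspace_iff.2 hAv, hv⟩
  · intro hμ
    obtain ⟨v, hv⟩ := hμ.exists_hasEigenvector
    exact ⟨v, hv.2, hv.apply_eq_smul⟩

lemma spectrum_mul_diagonal_mul_inv {P : Matrix ι ι K} (hP : IsUnit P) (x : ι → K) :
    spectrum K (P * diagonal x * P⁻¹) = Set.range x := by
  obtain ⟨u, rfl⟩ := hP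
  rw [← coe_units_inv, spectrum.units_conjugate, spectrum_diagonal]

end Eigenvalues

section RightInverse

variable {K ι κ : Type*} [Field K] [PartialOrder K] [StarRing K] [StarOrderedRing K]
  [Fintype ι] [DecidableEq ι] [Fintype κ]

lemma mul_conjTranspose_mul_inv_cancel {m : Type*} {Z : Matrix ι κ K}
    (hZ : Function.Injective Z.vecMul) (A : Matrix m ι K) : A * Z * Zᴴ * (Z * Zᴴ)⁻¹ = A := by
  have gram_det : IsUnit (Z * Zᴴ).det :=
    (isUnit_iff_isUnit_det _).1 (PosDef.mul_conjTranspose_self Z hZ).isUnit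
  rw [Matrix.mul_assoc A, mul_nonsing_inv_cancel_right _ _ gram_det]

lemma mul_conjTranspose_mul_inv_eq_conj {P : Matrix ι ι K} (hP : IsUnit P) {V : Matrix ι κ K}
    (hV : Function.Injective V.vecMul) (D : Matrix ι ι K) :
    P * (D * V) * (P * V)ᴴ * (P * V * (P * V)ᴴ)⁻¹ = P * D * P⁻¹ := by
  have rows_independent : Function.Injective (P * V).vecMul := by
    simpa only [Function.comp_def, vecMul_vecMul] using
      hV.comp (vecMul_injective_iff_isUnit.2 hP)
  have intertwines : P * (D * V) = P * D * P⁻¹ * (P * V) := by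
    rw [Matrix.mul_assoc _ P⁻¹, nonsing_inv_mul_cancel_left _ _ ((isUnit_iff_isUnit_det P).1 hP),
      Matrix.mul_assoc]
  rw [intertwines, mul_conjTranspose_mul_inv_cancel rows_independent]

end RightInverse

theorem esprit_eigenvalues_general {K ι : Type*} [Field K] [PartialOrder K] [StarRing K]
    [StarOrderedRing K] [Fintype ι] [DecidableEq ι] {ℓ : ℕ} (hℓ : Fintype.card ι ≤ ℓ)
    {x : ι → K} (hx : Function.Injective x) {P : Matrix ι ι K} (hP : IsUnit P)
    {V₀ V₁ Z₀ Z₁ : Matrix ι (Fin ℓ) K}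
    (hV₀ : V₀ = of fun i (t : Fin ℓ) => x i ^ (t : ℕ))
    (hV₁ : V₁ = of fun i (t : Fin ℓ) => x i ^ ((t : ℕ) + 1))
    (hZ₀ : Z₀ = P * V₀) (hZ₁ : Z₁ = P * V₁) :
    {μ : K | ∃ v : ι → K, v ≠ 0 ∧ (Z₁ * Z₀ᴴ * (Z₀ * Z₀ᴴ)⁻¹) *ᵥ v = μ • v} = Set.range x := by
  have V₀_eq : V₀ = rectVandermonde x 1 ℓ := by
    ext i t
    simp [hV₀, rectVandermonde_apply]
  have V₁_eq : V₁ = diagonal x * V₀ := by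
    rw [hV₁, V₀_eq, diagonal_mul_rectVandermonde_one]
  have V₀_rows : Function.Injective V₀.vecMul :=
    V₀_eq ▸ vecMul_rectVandermonde_one_injective hx hℓ
  rw [setOf_exists_mulVec_eq_smul, hZ₁, hZ₀, V₁_eq,
    mul_conjTranspose_mul_inv_eq_conj hP V₀_rows, spectrum_mul_diagonal_mul_inv hP]

/-- ESPRIT recovery: with `V₀ k t = x k ^ t`, `V₁ k t = x k ^ (t+1)`
(`n × ℓ` matrices, `ℓ ≥ n`, the `x k` pairwise distinct), `P` invertible and
`Z₀ = P V₀`, `Z₁ = P V₁`, the set of eigenvalues of `Z₁ Z₀ᴴ (Z₀ Z₀ᴴ)⁻¹` is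
exactly `{x 1, …, x n}`. -/
theorem esprit_eigenvalues (n ℓ : ℕ) (hℓ : ℓ ≥ n)
    (x : Fin n → ℂ) (hdist : Function.Injective x)
    (P : Matrix (Fin n) (Fin n) ℂ) (hP : IsUnit P)
    (V₀ V₁ Z₀ Z₁ : Matrix (Fin n) (Fin ℓ) ℂ)
    (hV₀ : V₀ = Matrix.of fun (k : Fin n) (t : Fin ℓ) => (x k) ^ (t : ℕ))
    (hV₁ : V₁ = Matrix.of fun (k : Fin n) (t : Fin ℓ) => (x k) ^ ((t : ℕ) + 1))
    (hZ₀ : Z₀ = P * V₀) (hZ₁ : Z₁ = P * V₁) :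
    {lam : ℂ | ∃ v : Fin n → ℂ, v ≠ 0 ∧
        (Z₁ * Z₀ᴴ * (Z₀ * Z₀ᴴ)⁻¹).mulVec v = lam • v} = Set.range x :=
  open ComplexOrder in
  esprit_eigenvalues_general ((Fintype.card_fin n).trans_le hℓ) hdist hP hV₀ hV₁ hZ₀ hZ₁
end

section
/- Let x_1, …, x_n be pairwise distinct complex numbers, ℓ a natural number with ℓ + 1 ≥ n, and V the n × (ℓ+1) matrix with entries V_{k,t} = x_k^t. Let G be an N × n complex matrix with linearly independent columns, D an invertible n × n diagonal matrix, and A = G D V. If A = B W, where B is an N × n matrix with linearly independent columns and W is an n × (ℓ+1) matrix, then there exists an invertible n × n matrix P such that W = P V. -/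
open Matrix

/-!
Two injective linear maps `f g : E → F` determine the partial isomorphism `g⁻¹ ∘ f` between the
subspaces `f⁻¹ (range g)` and `g⁻¹ (range f)` of `E`. When `E` is finite-dimensional, their
complements have the same dimension, so it extends to an automorphism of `E`. For `f = G D` and
`g = B` the matrix of this automorphism sends each column of `V` to the corresponding column
of `W`.
-/

theorem exists_linearEquiv_forall_apply_eq_of_map_eq {K E F : Type*} [DivisionRing K]
    [AddCommGroup E] [Module K E] [FiniteDimensional K E] [AddCommGroup F] [Module K F]
    {f g : E →ₗ[K] F} (hf : Function.Injective f) (hg : Function.Injective g) :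
    ∃ e : E ≃ₗ[K] E, ∀ x y, f x = g y → e x = y := by
  let S : Submodule K E := g.range.comap f
  let h : S →ₗ[K] E :=
    (LinearEquiv.ofInjective g hg).symm ∘ₗ f.restrict (p := S) (q := g.range) fun _ hx ↦ hx
  have map_h (x : S) : g (h x) = f x :=
    congrArg Subtype.val ((LinearEquiv.ofInjective g hg).apply_symm_apply _)
  have h_injective : Function.Injective h := fun x y hxy ↦
    Subtype.ext <| hf <| by rw [← map_h, ← map_h, hxy]
  obtain ⟨e, he⟩ := Submodule.exists_linearEquiv_restrict_eq (LinearEquiv.ofInjective h h_injective)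
  refine ⟨e, fun x y hxy ↦ hg ?_⟩
  have hx : x ∈ S := ⟨y, hxy.symm⟩
  calc g (e x) = g (h ⟨x, hx⟩) := congrArg g (he ⟨x, hx⟩).symm
    _ = f x := map_h ⟨x, hx⟩
    _ = g y := hxy

section

variable {K m n : Type*} [Field K] [Fintype n] [DecidableEq n]

theorem exists_isUnit_forall_mulVec_eq_of_mulVec_eq {A B : Matrix m n K}
    (hA : Function.Injective A.mulVec) (hB : Function.Injective B.mulVec) :
    ∃ P : Matrix n n K, IsUnit P ∧ ∀ v w, A *ᵥ v = B *ᵥ w → P *ᵥ v = w := by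
  obtain ⟨e, he⟩ :=
    exists_linearEquiv_forall_apply_eq_of_map_eq (f := A.mulVecLin) (g := B.mulVecLin) hA hB
  refine ⟨LinearMap.toMatrix' e.toLinearMap, ?_, fun v w hvw ↦ ?_⟩
  · exact LinearMap.isUnit_toMatrix'_iff.2 ((Module.End.isUnit_iff _).2 e.bijective)
  · rw [LinearMap.toMatrix'_mulVec]
    exact he v w hvw

theorem factorization_vandermonde_general {l : Type*} {G B : Matrix m n K} {D : Matrix n n K}
    {V W : Matrix n l K} (hG : LinearIndependent K G.col) (hD : IsUnit D)
    (hB : LinearIndependent K B.col) (h : G * D * V = B * W) :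
    ∃ P : Matrix n n K, IsUnit P ∧ W = P * V := by
  have hGD : Function.Injective (G * D).mulVec := by
    simpa only [Function.comp_def, mulVec_mulVec] using
      (mulVec_injective_iff.2 hG).comp (mulVec_injective_of_isUnit hD)
  obtain ⟨P, hP, hPVW⟩ :=
    exists_isUnit_forall_mulVec_eq_of_mulVec_eq hGD (mulVec_injective_iff.2 hB)
  have col_eq (t : l) : P *ᵥ V.col t = W.col t :=
    hPVW _ _ (funext fun i ↦ congrFun₂ h i t)
  exact ⟨P, hP, ext fun k t ↦ (congrFun (col_eq t) k).symm⟩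

end

/-- Let `V` be the `n × (ℓ+1)` Vandermonde matrix of pairwise distinct
`x 1, …, x n` with `ℓ + 1 ≥ n`, `G` an `N × n` matrix with linearly independent
columns, `D` an invertible diagonal matrix, and `A = G D V`.  If `A = B W` with
`B` an `N × n` matrix with linearly independent columns, then `W = P V` for
some invertible `n × n` matrix `P`. -/
theorem factorization_vandermonde (N n ℓ : ℕ) (hℓ : ℓ + 1 ≥ n)
    (x : Fin n → ℂ) (hdist : Function.Injective x)
    (V : Matrix (Fin n) (Fin (ℓ + 1)) ℂ)
    (hV : V = Matrix.of fun (k : Fin n) (t : Fin (ℓ + 1)) => (x k) ^ (t : ℕ))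
    (G : Matrix (Fin N) (Fin n) ℂ)
    (hG : LinearIndependent ℂ (fun k : Fin n => (fun i : Fin N => G i k)))
    (d : Fin n → ℂ) (hd : ∀ k, d k ≠ 0)
    (A : Matrix (Fin N) (Fin (ℓ + 1)) ℂ)
    (hA : A = G * Matrix.diagonal d * V)
    (B : Matrix (Fin N) (Fin n) ℂ)
    (hB : LinearIndependent ℂ (fun k : Fin n => (fun i : Fin N => B i k)))
    (W : Matrix (Fin n) (Fin (ℓ + 1)) ℂ) (hW : A = B * W) :
    ∃ P : Matrix (Fin n) (Fin n) ℂ, IsUnit P ∧ W = P * V :=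
  factorization_vandermonde_general hG
    (isUnit_diagonal.2 (Pi.isUnit_iff.2 fun k ↦ (hd k).isUnit)) hB (hA.symm.trans hW)
end

section
/- Let M be an N × N complex matrix, x_1, …, x_n pairwise distinct complex numbers, and g_1, …, g_n linearly independent vectors in ℂ^N with M g_k = x_k g_k for each k. Let w_1, …, w_n be nonzero complex numbers, u = Σ_{k=1}^{n} w_k g_k, and ℓ ≥ n. Let A be the N × (ℓ+1) matrix whose t-th column is M^t u for t = 0, …, ℓ. Suppose A = B W, where B is an N × n matrix with linearly independent columns and W is an n × (ℓ+1) matrix. Let Z_0 be W with its last column removed and Z_1 be W with its first column removed. Then Z_0 Z_0* is invertible and the set of eigenvalues of Z_1 Z_0* (Z_0 Z_0*)^{-1} is exactly {x_1, …, x_n}. -/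
open Matrix

/-!
Scale the eigenvectors by the weights and put them in the columns of `E`. Then `A = E V`, where `V`
is the Vandermonde matrix of the nodes, and both `E` and `V` have full rank. Hence any factorization
`A = B W` through the same inner dimension differs from this one by a change of basis `Q`, that is,
`Q W = V`. Deleting the first column of `V` instead of the last multiplies its rows by the nodes, so
`Z₁ = S Z₀` with `S = Q⁻¹ diag(x) Q`. As `Z₀` has full row rank, multiplying `Z₁` by any right
inverse of `Z₀` returns `S`, whose spectrum is the set of nodes.
-/

variable {m ι τ R K : Type*}

section LinearAlgebra

theorem mul_left_cancel_of_mulVec_injective [Fintype ι] [NonUnitalNonAssocSemiring R]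
    {E : Matrix m ι R} (hE : Function.Injective E.mulVec) {X Y : Matrix ι τ R}
    (h : E * X = E * Y) : X = Y := by
  ext i j
  exact congrFun (hE (congrArg (fun C : Matrix m τ R ↦ C.col j) h)) i

theorem pow_mul_eq_mul_pow_of_mul_eq_mul [Fintype m] [DecidableEq m] [Fintype ι] [DecidableEq ι]
    [Semiring R] {M : Matrix m m R} {E : Matrix m ι R} {D : Matrix ι ι R} (h : M * E = E * D)
    (t : ℕ) : M ^ t * E = E * D ^ t := by
  induction t with
  | zero => simp
  | succ t ih =>
    rw [pow_succ, Matrix.mul_assoc, h, ← Matrix.mul_assoc, ih, Matrix.mul_assoc, ← pow_succ]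

theorem isUnit_self_mul_conjTranspose_of_mul_eq_one [Fintype ι] [DecidableEq ι] [Fintype τ]
    [Field K] [PartialOrder K] [StarRing K] [StarOrderedRing K] {Z : Matrix ι τ K}
    {Y : Matrix τ ι K} (h : Z * Y = 1) : IsUnit (Z * Zᴴ) := by
  have hZ : Function.LeftInverse Y.vecMul Z.vecMul := fun v ↦ by simp [h]
  exact (PosDef.mul_conjTranspose_self Z hZ.injective).isUnit

theorem setOf_exists_mulVec_eq_smul_eq_spectrum [Fintype ι] [DecidableEq ι] [Field K]
    (S : Matrix ι ι K) : {μ : K | ∃ v, v ≠ 0 ∧ S *ᵥ v = μ • v} = spectrum K S := by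
  ext μ
  rw [← spectrum_toLin', ← Module.End.hasEigenvalue_iff_mem_spectrum]
  refine ⟨fun ⟨v, hv, hSv⟩ ↦ ?_, fun h ↦ ?_⟩
  · exact Module.End.hasEigenvalue_of_hasEigenvector
      (Module.End.hasEigenvector_iff.2 ⟨Module.End.mem_eigenspace_iff.2 hSv, hv⟩)
  · obtain ⟨v, hv⟩ := h.exists_hasEigenvector
    exact ⟨v, hv.2, hv.apply_eq_smul⟩

end LinearAlgebra

section Vandermonde

theorem rectVandermonde_one_submatrix_castSucc [CommRing R] (x : ι → R) (ℓ : ℕ) :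
    (rectVandermonde x 1 (ℓ + 1)).submatrix id Fin.castSucc = rectVandermonde x 1 ℓ := by
  ext k t
  simp [rectVandermonde_apply]

theorem rectVandermonde_one_submatrix_succ [Fintype ι] [DecidableEq ι] [CommRing R] (x : ι → R)
    (ℓ : ℕ) :
    (rectVandermonde x 1 (ℓ + 1)).submatrix id Fin.succ = diagonal x * rectVandermonde x 1 ℓ := by
  ext k t
  simp [rectVandermonde_apply, pow_succ']

theorem exists_rectVandermonde_one_mul_eq_one [Fintype ι] [DecidableEq ι] [Field K] {x : ι → K}
    (hx : Function.Injective x) {ℓ : ℕ} (hℓ : Fintype.card ι ≤ ℓ) :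
    ∃ Y : Matrix (Fin ℓ) ι K, rectVandermonde x 1 ℓ * Y = 1 := by
  -- The columns of `Y` hold the coefficients of the Lagrange basis polynomials at the nodes.
  let L (k : ι) : Polynomial K := Lagrange.basis Finset.univ x k
  let Y : Matrix (Fin ℓ) ι K := of fun t k ↦ (L k).coeff t
  refine ⟨Y, ?_⟩
  ext i k
  have hdeg : (L k).natDegree < ℓ := by
    have : 0 < Fintype.card ι := Fintype.card_pos_iff.2 ⟨k⟩
    rw [Lagrange.natDegree_basis hx.injOn (Finset.mem_univ k), Finset.card_univ]
    omega
  calc (rectVandermonde x 1 ℓ * Y) i k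
      = ∑ t : Fin ℓ, (L k).coeff t * x i ^ (t : ℕ) := by
        simp [Y, Matrix.mul_apply, rectVandermonde_apply, mul_comm]
    _ = (L k).eval (x i) := by
        rw [Polynomial.eval_eq_sum_range' hdeg,
          Fin.sum_univ_eq_sum_range fun t ↦ (L k).coeff t * x i ^ t]
    _ = (1 : Matrix ι ι K) i k := by
        obtain rfl | hik := eq_or_ne i k
        · rw [one_apply_eq, Lagrange.eval_basis_self hx.injOn (Finset.mem_univ i)]
        · rw [one_apply_ne hik, Lagrange.eval_basis_of_ne hik.symm (Finset.mem_univ i)]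

end Vandermonde

section Krylov

variable [Fintype m] [DecidableEq m]

/-- The Krylov matrix of `M` and `u`, with columns `u, M u, …, M ^ (ℓ - 1) u`. The measurement
matrix of ESPRIT is of this form. Here `ℓ` counts the columns, so it is one more than the highest
power of `M`. -/
def krylovMatrix [Semiring R] (M : Matrix m m R) (u : m → R) (ℓ : ℕ) : Matrix m (Fin ℓ) R :=
  of fun i t ↦ (M ^ (t : ℕ) *ᵥ u) i

variable [Fintype ι] [DecidableEq ι]

theorem krylovMatrix_mulVec_one [CommRing R] {M : Matrix m m R} {E : Matrix m ι R} {x : ι → R}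
    (h : M * E = E * diagonal x) (ℓ : ℕ) :
    krylovMatrix M (E *ᵥ 1) ℓ = E * rectVandermonde x 1 ℓ := by
  ext i t
  have hpow : M ^ (t : ℕ) * E = E * diagonal (x ^ (t : ℕ)) := by
    rw [pow_mul_eq_mul_pow_of_mul_eq_mul h, diagonal_pow]
  calc krylovMatrix M (E *ᵥ 1) ℓ i t
      = (E * diagonal (x ^ (t : ℕ))) i ⬝ᵥ 1 := by
        rw [krylovMatrix, of_apply, mulVec_mulVec, hpow, mulVec]
    _ = (E * rectVandermonde x 1 ℓ) i t := by
        simp [dotProduct, mul_diagonal, Matrix.mul_apply (M := E) (N := rectVandermonde x 1 ℓ),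
          rectVandermonde_apply]

theorem exists_units_mul_eq_rectVandermonde_one [Field K] {M : Matrix m m K} {E : Matrix m ι K}
    {x : ι → K} (hE : Function.Injective E.mulVec) (hM : M * E = E * diagonal x)
    (hx : Function.Injective x) {ℓ : ℕ} (hℓ : Fintype.card ι ≤ ℓ) {B : Matrix m ι K}
    {W : Matrix ι (Fin ℓ) K} (hBW : krylovMatrix M (E *ᵥ 1) ℓ = B * W) :
    ∃ Q : (Matrix ι ι K)ˣ, Q.val * W = rectVandermonde x 1 ℓ := by
  obtain ⟨Y, hY⟩ := exists_rectVandermonde_one_mul_eq_one hx hℓ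
  rw [krylovMatrix_mulVec_one hM] at hBW
  have hEB : E = B * (W * Y) := by
    rw [← Matrix.mul_assoc, ← hBW, Matrix.mul_assoc, hY, Matrix.mul_one]
  have hWY : IsUnit (W * Y) := by
    refine mulVec_injective_iff_isUnit.1 (Function.Injective.of_comp (f := B.mulVec) ?_)
    simpa only [hEB, Function.comp_def, mulVec_mulVec] using hE
  obtain ⟨P, hP⟩ := hWY
  refine ⟨P⁻¹, mul_left_cancel_of_mulVec_injective hE ?_⟩
  calc E * (P⁻¹.val * W)
      = B * (P.val * P⁻¹.val) * W := by rw [hEB, ← hP]; simp only [Matrix.mul_assoc]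
    _ = E * rectVandermonde x 1 ℓ := by rw [Units.mul_inv, Matrix.mul_one, hBW]

end Krylov

section Esprit

variable [Fintype ι] {ℓ : ℕ}

theorem mul_submatrix_castSucc_eq_rectVandermonde_one [CommRing R] {κ : Type*} {x : κ → R}
    {Q : Matrix κ ι R} {W : Matrix ι (Fin (ℓ + 1)) R}
    (hQ : Q * W = rectVandermonde x 1 (ℓ + 1)) :
    Q * W.submatrix id Fin.castSucc = rectVandermonde x 1 ℓ := by
  rw [← rectVandermonde_one_submatrix_castSucc, ← hQ]
  rfl

variable [DecidableEq ι]

theorem submatrix_succ_eq_conj_diagonal_mul [CommRing R] {x : ι → R} {Q : (Matrix ι ι R)ˣ}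
    {W : Matrix ι (Fin (ℓ + 1)) R} (hQ : Q.val * W = rectVandermonde x 1 (ℓ + 1)) :
    W.submatrix id Fin.succ = Q⁻¹.val * diagonal x * Q.val * W.submatrix id Fin.castSucc := by
  have hsucc : Q.val * W.submatrix id Fin.succ = diagonal x * rectVandermonde x 1 ℓ := by
    rw [← rectVandermonde_one_submatrix_succ, ← hQ]
    rfl
  rw [Matrix.mul_assoc, mul_submatrix_castSucc_eq_rectVandermonde_one hQ, Matrix.mul_assoc, ← hsucc,
    ← Matrix.mul_assoc, Units.inv_mul, Matrix.one_mul]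

variable [Field K] {x : ι → K} {Q : (Matrix ι ι K)ˣ} {W : Matrix ι (Fin (ℓ + 1)) K}

theorem exists_submatrix_castSucc_mul_eq_one (hx : Function.Injective x)
    (hℓ : Fintype.card ι ≤ ℓ) (hQ : Q.val * W = rectVandermonde x 1 (ℓ + 1)) :
    ∃ Y : Matrix (Fin ℓ) ι K, W.submatrix id Fin.castSucc * Y = 1 := by
  obtain ⟨Y, hY⟩ := exists_rectVandermonde_one_mul_eq_one hx hℓ
  refine ⟨Y * Q.val, ?_⟩
  rw [← Matrix.mul_assoc, mul_eq_one_comm, ← Matrix.mul_assoc,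
    mul_submatrix_castSucc_eq_rectVandermonde_one hQ, hY]

theorem spectrum_submatrix_succ_mul_eq_range (hQ : Q.val * W = rectVandermonde x 1 (ℓ + 1))
    {Y : Matrix (Fin ℓ) ι K} (hY : W.submatrix id Fin.castSucc * Y = 1) :
    spectrum K (W.submatrix id Fin.succ * Y) = Set.range x := by
  rw [submatrix_succ_eq_conj_diagonal_mul hQ, Matrix.mul_assoc, hY, Matrix.mul_one,
    spectrum.units_conjugate', spectrum_diagonal]

theorem esprit_correctness_general [Fintype m] [DecidableEq m] [PartialOrder K] [StarRing K]
    [StarOrderedRing K] (hℓ : Fintype.card ι ≤ ℓ) (M : Matrix m m K) (hx : Function.Injective x)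
    (g : ι → m → K) (hg : LinearIndependent K g) (hM : ∀ k, M *ᵥ g k = x k • g k)
    (w : ι → K) (hw : ∀ k, w k ≠ 0) (B : Matrix m ι K)
    (hBW : krylovMatrix M (∑ k, w k • g k) (ℓ + 1) = B * W) (Z₀ Z₁ : Matrix ι (Fin ℓ) K)
    (hZ₀ : Z₀ = W.submatrix id Fin.castSucc) (hZ₁ : Z₁ = W.submatrix id Fin.succ) :
    IsUnit (Z₀ * Z₀ᴴ) ∧
      {μ : K | ∃ v, v ≠ 0 ∧ (Z₁ * Z₀ᴴ * (Z₀ * Z₀ᴴ)⁻¹) *ᵥ v = μ • v} = Set.range x := by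
  let E : Matrix m ι K := (of fun k ↦ w k • g k)ᵀ
  have hE : Function.Injective E.mulVec :=
    mulVec_injective_iff.2 (hg.units_smul fun k ↦ Units.mk0 (w k) (hw k))
  have hME : M * E = E * diagonal x := by
    ext i k
    calc (M * E) i k = (M *ᵥ (w k • g k)) i := rfl
      _ = (E * diagonal x) i k := by
        simp [E, mulVec_smul, hM, mul_diagonal, mul_left_comm, mul_comm]
  have hEw : E *ᵥ 1 = ∑ k, w k • g k := mulVec_one E
  obtain ⟨Q, hQ⟩ := exists_units_mul_eq_rectVandermonde_one hE hME hx (hℓ.trans ℓ.le_succ)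
    (hEw ▸ hBW)
  obtain ⟨Y, hY⟩ := exists_submatrix_castSucc_mul_eq_one hx hℓ hQ
  subst hZ₀ hZ₁
  have hGram := isUnit_self_mul_conjTranspose_of_mul_eq_one hY
  refine ⟨hGram, ?_⟩
  rw [setOf_exists_mulVec_eq_smul_eq_spectrum, Matrix.mul_assoc]
  apply spectrum_submatrix_succ_mul_eq_range hQ
  rw [← Matrix.mul_assoc, mul_nonsing_inv _ ((isUnit_iff_isUnit_det _).1 hGram)]

end Esprit

/-- Noiseless ESPRIT correctness driven by the eigenmatrix `M`.  With pairwise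
distinct `x k`, linearly independent eigenvectors `g k` (`M g_k = x_k • g_k`),
nonzero weights, `u = ∑ k, w k • g k`, `ℓ ≥ n`, and `A` the `N × (ℓ+1)` matrix
with `t`-th column `M^t u`: for any factorization `A = B W` with `B` having
linearly independent columns, letting `Z₀` (resp. `Z₁`) be `W` with its last
(resp. first) column removed, the matrix `Z₀ Z₀ᴴ` is invertible and the set of
eigenvalues of `Z₁ Z₀ᴴ (Z₀ Z₀ᴴ)⁻¹` is exactly `{x 1, …, x n}`. -/
theorem esprit_correctness (N n ℓ : ℕ) (hℓ : ℓ ≥ n)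
    (M : Matrix (Fin N) (Fin N) ℂ)
    (x : Fin n → ℂ) (hdist : Function.Injective x)
    (g : Fin n → (Fin N → ℂ)) (hind : LinearIndependent ℂ g)
    (hg : ∀ k, M.mulVec (g k) = x k • g k)
    (w : Fin n → ℂ) (hw : ∀ k, w k ≠ 0)
    (u : Fin N → ℂ) (hu : u = ∑ k, w k • g k)
    (A : Matrix (Fin N) (Fin (ℓ + 1)) ℂ)
    (hA : A = Matrix.of fun (i : Fin N) (t : Fin (ℓ + 1)) =>
      (M ^ (t : ℕ)).mulVec u i)
    (B : Matrix (Fin N) (Fin n) ℂ)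
    (hB : LinearIndependent ℂ (fun k : Fin n => (fun i : Fin N => B i k)))
    (W : Matrix (Fin n) (Fin (ℓ + 1)) ℂ) (hW : A = B * W)
    (Z₀ Z₁ : Matrix (Fin n) (Fin ℓ) ℂ)
    (hZ₀ : Z₀ = Matrix.of fun (k : Fin n) (t : Fin ℓ) => W k t.castSucc)
    (hZ₁ : Z₁ = Matrix.of fun (k : Fin n) (t : Fin ℓ) => W k t.succ) :
    IsUnit (Z₀ * Z₀ᴴ) ∧
      {lam : ℂ | ∃ v : Fin n → ℂ, v ≠ 0 ∧
        (Z₁ * Z₀ᴴ * (Z₀ * Z₀ᴴ)⁻¹).mulVec v = lam • v} = Set.range x := by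
  subst hu hA
  open scoped ComplexOrder in
  exact esprit_correctness_general (by simpa using hℓ) M hdist g hind hg w hw B hW Z₀ Z₁ hZ₀ hZ₁
end
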